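/- arXiv:2204.04919 — 2 statements merged into one kernel-verified Lean document; each statement's English description precedes it below -/
import Mathlib

section
/- Let μ be a probability measure on ℝ with a density f with respect to Lebesgue measure, let ε ∈ (0,1), and suppose the identity function is integrable with respect to μ. Define L(y) = ∫ (h - y) · ((1-ε) - indicator{h' : h' ≤ y}(h)) dμ(h). Then for every y ∈ ℝ at which the cumulative distribution function F(y) = μ(Iic y) is continuous, L is differentiable at y with derivative L'(y) = F(y) - (1-ε); equivalently, L'(y) = ε·F(y) - (1-ε)·(1 - F(y)). -/
open MeasureTheory Set

/-- The pinball loss at level `1 - ε`, written with a positive part. -/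
theorem pinball_eq_add_max (ε h y : ℝ) :
    (h - y) * ((1 - ε) - Set.indicator {h' : ℝ | h' ≤ y} (fun _ => (1:ℝ)) h) =
      (1 - ε) * (h - y) + max (y - h) 0 := by
  by_cases hy : h ≤ y
  · rw [Set.indicator_of_mem (by exact hy), max_eq_left (by linarith)]
    ring
  · rw [Set.indicator_of_notMem (by exact hy), max_eq_right (by linarith)]
    ring

/-- For a finite measure without an atom at `y`, the expected positive part `∫ (t - h)⁺ dμ(h)` has
derivative `μ (Iic y)` at `t = y`. -/
theorem hasDerivAt_integral_max_sub (μ : Measure ℝ) [IsFiniteMeasure μ]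
    (hint : Integrable (fun h : ℝ => h) μ) (y : ℝ) (hy : μ {y} = 0) :
    HasDerivAt (fun t => ∫ h, max (t - h) 0 ∂μ) (μ (Set.Iic y)).toReal y := by
  have hderiv : ∀ᵐ h ∂μ, HasDerivAt (fun t : ℝ => max (t - h) 0)
      ((Set.Iic y).indicator (fun _ => (1:ℝ)) h) y := by
    filter_upwards [compl_mem_ae_iff.mpr hy] with h hne
    rcases lt_or_gt_of_ne (show h ≠ y from hne) with hlt | hgt
    · rw [Set.indicator_of_mem (by exact hlt.le)]
      refine ((hasDerivAt_id y).sub_const h).congr_of_eventuallyEq ?_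
      filter_upwards [lt_mem_nhds hlt] with t ht
      exact max_eq_left (by simpa using ht.le)
    · rw [Set.indicator_of_notMem (by simpa using hgt)]
      refine (hasDerivAt_const y (0:ℝ)).congr_of_eventuallyEq ?_
      filter_upwards [gt_mem_nhds hgt] with t ht
      exact max_eq_right (by linarith)
  have hlip : ∀ᵐ h ∂μ, LipschitzOnWith (Real.nnabs 1) (fun t : ℝ => max (t - h) 0) Set.univ := by
    refine .of_forall fun h => LipschitzWith.lipschitzOnWith ?_
    simpa using (LipschitzWith.id.sub (LipschitzWith.const h)).max_const (0:ℝ)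
  have key := (hasDerivAt_integral_of_dominated_loc_of_lip (bound := fun _ => (1:ℝ))
    Filter.univ_mem (.of_forall fun t => by fun_prop)
    (((integrable_const y).sub hint).pos_part)
    (aestronglyMeasurable_const.indicator measurableSet_Iic) hlip
    (integrable_const 1) hderiv).2
  simpa [integral_indicator_const, measurableSet_Iic, Measure.real] using key

/-- **Derivative of the expected pinball loss.**
If `μ` is a probability measure on `ℝ` with density `f` w.r.t. Lebesgue measure,
`ε ∈ (0,1)`, the identity is integrable, and the CDF `F(y) = μ (Iic y)` is continuous
at `y`, then the expected pinball loss
`L(y) = ∫ (h - y) * ((1-ε) - 𝟙[h ≤ y]) dμ(h)` is differentiable at `y` with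
derivative `F(y) - (1-ε)`. -/
theorem expected_pinball_loss_hasDerivAt
    (μ : Measure ℝ) [IsProbabilityMeasure μ] (f : ℝ → ENNReal)
    (hf : μ = MeasureTheory.volume.withDensity f)
    (ε : ℝ) (hε : ε ∈ Set.Ioo (0:ℝ) 1)
    (hint : Integrable (fun h : ℝ => h) μ)
    (L : ℝ → ℝ)
    (hL : ∀ y : ℝ, L y =
      ∫ h, (h - y) * ((1 - ε) - Set.indicator {h' : ℝ | h' ≤ y} (fun _ => (1:ℝ)) h) ∂μ)
    (y : ℝ) (hFcont : ContinuousAt (fun t : ℝ => (μ (Set.Iic t)).toReal) y) :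
    HasDerivAt L ((μ (Set.Iic y)).toReal - (1 - ε)) y := by
  have hy : μ {y} = 0 := by
    rw [hf]
    exact withDensity_absolutelyContinuous _ _ Real.volume_singleton
  have hL' : L = fun t => (1 - ε) * ((∫ h, h ∂μ) - t) + ∫ h, max (t - h) 0 ∂μ := by
    funext t
    have hsub : Integrable (fun h : ℝ => h - t) μ := hint.sub (integrable_const t)
    have hmax : Integrable (fun h : ℝ => max (t - h) 0) μ :=
      ((integrable_const t).sub hint).pos_part
    simp_rw [hL, pinball_eq_add_max]
    rw [integral_add (hsub.const_mul _) hmax, integral_const_mul,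
      integral_sub hint (integrable_const t)]
    simp
  rw [hL']
  refine HasDerivAt.congr_deriv ((((hasDerivAt_id y).const_sub (∫ h, h ∂μ)).const_mul (1 - ε)).add
    (hasDerivAt_integral_max_sub μ hint y hy)) ?_
  ring
end

section
/- Let (Ω, P) be a probability space, H, Ĥ : Ω → ℝ random variables, ε ∈ (0,1), and ρ ∈ ℝ. Define Q^{1-ε}(X) = sInf {y : ℝ | P(X ≤ y) ≥ 1-ε}. If H ≤ Ĥ + ρ almost surely and Q^{1-ε}(Ĥ) + ρ ≤ 0, then P(H ≤ 0) ≥ 1-ε. That is, the calibrated quantile condition on the surrogate Ĥ is an inner approximation of the joint chance constraint on H. -/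
open MeasureTheory Set

/-- If the `(1 - ε)`-quantile of a probability measure on `ℝ` is at most `t`, then the lower
ray at `t` has mass at least `1 - ε`. -/
theorem ofReal_one_sub_le_measure_Iic_of_sInf_le (μ : Measure ℝ) [IsProbabilityMeasure μ]
    {ε t : ℝ} (hε : 0 < ε)
    (ht : sInf {y : ℝ | ENNReal.ofReal (1 - ε) ≤ μ (Iic y)} ≤ t) :
    ENNReal.ofReal (1 - ε) ≤ μ (Iic t) := by
  have hne : {y : ℝ | ENNReal.ofReal (1 - ε) ≤ μ (Iic y)}.Nonempty := by
    obtain ⟨y, hy⟩ := ((ProbabilityTheory.tendsto_cdf_atTop μ).eventually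
      (lt_mem_nhds (sub_lt_self 1 hε))).exists
    refine ⟨y, ?_⟩
    rw [mem_ofPred_eq, ← ProbabilityTheory.ofReal_cdf]
    exact ENNReal.ofReal_le_ofReal hy.le
  have hgt : ∀ y > t, ENNReal.ofReal (1 - ε) ≤ μ (Iic y) := by
    intro y hy
    obtain ⟨z, hz, hzy⟩ := exists_lt_of_csInf_lt hne (ht.trans_lt hy)
    exact le_trans hz (measure_mono (Iic_subset_Iic.2 hzy.le))
  have hcont := ((ProbabilityTheory.cdf μ).right_continuous t).mono Ioi_subset_Ici_self
  have htend := ENNReal.tendsto_ofReal hcont.tendsto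
  simp only [ProbabilityTheory.ofReal_cdf] at htend
  exact ge_of_tendsto htend (eventually_mem_nhdsWithin.mono hgt)

/-- **Calibrated surrogate quantile condition is an inner approximation of the
joint chance constraint.** If `H ≤ Ĥ + ρ` almost surely and the calibrated
`(1-ε)`-quantile of `Ĥ` is nonpositive, then `P(H ≤ 0) ≥ 1-ε`. -/
theorem chance_constraint_of_calibrated_quantile
    {Ω : Type*} [MeasurableSpace Ω] (P : Measure Ω) [IsProbabilityMeasure P]
    (H Hhat : Ω → ℝ) (hH : Measurable H) (hHhat : Measurable Hhat)
    (ε ρ : ℝ) (hε : ε ∈ Set.Ioo (0:ℝ) 1)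
    (hdom : ∀ᵐ ω ∂P, H ω ≤ Hhat ω + ρ)
    (hcal : sInf {y : ℝ | ENNReal.ofReal (1 - ε) ≤ P {ω | Hhat ω ≤ y}} + ρ ≤ 0) :
    ENNReal.ofReal (1 - ε) ≤ P {ω | H ω ≤ 0} := by
  have hmap : ∀ y, P.map Hhat (Iic y) = P {ω | Hhat ω ≤ y} :=
    fun y => Measure.map_apply hHhat measurableSet_Iic
  have : IsProbabilityMeasure (P.map Hhat) :=
    Measure.isProbabilityMeasure_map hHhat.aemeasurable
  have hquant : ENNReal.ofReal (1 - ε) ≤ P {ω | Hhat ω ≤ -ρ} := by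
    rw [← hmap]
    refine ofReal_one_sub_le_measure_Iic_of_sInf_le _ hε.1 ?_
    simp only [hmap]
    linarith
  refine hquant.trans (measure_mono_ae ?_)
  filter_upwards [hdom] with ω hω (hle : Hhat ω ≤ -ρ)
  exact show H ω ≤ 0 by linarith
end
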